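/- arXiv:2311.10262 — 4 statements merged into one kernel-verified Lean document; each statement's English description precedes it below -/
import Mathlib

section
/- Let n ≥ 2 and let w be a word with letters in {1,2,3} of length at least n whose last n letters are not all the same. Then for every vector v ∈ ℝ³ with nonnegative coordinates, the vector u = (A_w)ᵗ · A_w · v has nonnegative coordinates and each coordinate of u is at most the sum of the other two coordinates (i.e. u lies in the closed cone over the projective triangle Δ'‾ with vertices (0,1,1), (1,0,1), (1,1,0)). -/
/-!
The transposed generator of a letter `i` adds `u i` to every other coordinate of `u ≥ 0`. This
forces the polygon inequality at `i` and, as there are at least three letters, preserves the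
inequalities at the other letters. The latter hold beforehand for a vector of the polygon cone, and
also for the image of a nonnegative vector under the generator of `i` itself, because its `i`-th
coordinate dominates each of the others. So, with `w = i :: s`, the Gram matrix of the first letter
`i` maps the nonnegative vector `A_s v` into the polygon cone, which the transposed generators of
the letters of `s` preserve.
-/

open Matrix MeasureTheory

noncomputable section

abbrev M3 := Matrix (Fin 3) (Fin 3) ℝ
abbrev E3 := EuclideanSpace ℝ (Fin 3)

/-- The Rauzy generators. -/
def A : Fin 3 → M3
  | 0 => !![1,1,1; 0,1,0; 0,0,1]
  | 1 => !![1,0,0; 1,1,1; 0,0,1]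
  | 2 => !![1,0,0; 0,1,0; 1,1,1]

/-- Product of the matrices along a word. -/
def Aw (w : List (Fin 3)) : M3 := (w.map A).prod

/-- Euclidean norm of a vector in `ℝ³`. -/
def enorm3 (v : Fin 3 → ℝ) : ℝ := Real.sqrt (v 0 ^ 2 + v 1 ^ 2 + v 2 ^ 2)

/-- Largest singular value = `ℓ²` operator norm. -/
def sval1 (g : M3) : ℝ := ‖(Matrix.toEuclideanLin g).toContinuousLinearMap‖

/-- Smallest singular value (for invertible `g`): `σ₃(g) = σ₁(g⁻¹)⁻¹`. -/
def sval3 (g : M3) : ℝ := (sval1 g⁻¹)⁻¹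

/-- Middle singular value (for invertible `g`): `σ₂ = |det g|·σ₁(g⁻¹)/σ₁(g)`. -/
def sval2 (g : M3) : ℝ := |g.det| * sval1 g⁻¹ / sval1 g

def basis3 (i : Fin 3) : Fin 3 → ℝ := Pi.single i 1

def omega3 (v : Fin 3 → ℝ) : ℝ := v 0 + v 1 + v 2

def ofE : E3 → (Fin 3 → ℝ) := WithLp.equiv 2 (Fin 3 → ℝ)
def toE : (Fin 3 → ℝ) → E3 := (WithLp.equiv 2 (Fin 3 → ℝ)).symm

/-- The standard 2-simplex in `ℝ³` (with the Euclidean metric). -/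
def simplex : Set E3 := {x | (∀ i, 0 ≤ ofE x i) ∧ omega3 (ofE x) = 1}

/-- The projective action of the word `w` on the simplex. -/
def fmap (w : List (Fin 3)) (x : E3) : E3 :=
  toE ((omega3 ((Aw w) *ᵥ ofE x))⁻¹ • ((Aw w) *ᵥ ofE x))

/-- The Rauzy gasket. -/
def gasket : Set E3 :=
  ⋂ n : ℕ, ⋃ w ∈ {w : List (Fin 3) | w.length = n + 1}, fmap w '' simplex

/-- Falconer's singular value function. -/
def phi (s : ℝ) (g : M3) : ℝ :=
  if s ≤ 1 then (sval2 g / sval1 g) ^ s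
  else (sval2 g / sval1 g) * (sval3 g / sval1 g) ^ (s - 1)

/-- The affinity exponent of the Rauzy semigroup. -/
def sA : ℝ :=
  sSup {s : ℝ | s ∈ Set.Ioc (0:ℝ) 2 ∧
    ¬ Summable fun w : {w : List (Fin 3) // w ≠ []} => phi s (Aw w.1)}

/-- A word has its last `k` letters not all the same. -/
def LastNotAllSame (w : List (Fin 3)) (k : ℕ) : Prop :=
  k ≤ w.length ∧ ¬ ∃ c, ∀ x ∈ w.drop (w.length - k), x = c

/-- A word's last two letters are different. -/
def LastTwoDiff (w : List (Fin 3)) : Prop :=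
  ∃ u a b, w = u ++ [a, b] ∧ a ≠ b

/-- The Cartan projection `κ(g) = (log σ₁, log σ₂, log σ₃)`. -/
def kappa (g : M3) : Fin 3 → ℝ :=
  ![Real.log (sval1 g), Real.log (sval2 g), Real.log (sval3 g)]

/-- The linear functional `ψ_s` on the Cartan algebra. -/
def psi (s : ℝ) (lam : Fin 3 → ℝ) : ℝ := (lam 0 - lam 1) + (s - 1) * (lam 0 - lam 2)

end

section Semiring

variable {ι R : Type*} [DecidableEq ι] [Semiring R]

variable (R) in
/-- The Arnoux–Rauzy generator of the letter `i`: it replaces the `i`-th coordinate of a column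
vector by the sum of all the coordinates. For three letters it is `A i`. -/
def arnouxRauzyMatrix (i : ι) : Matrix ι ι R :=
  (1 : Matrix ι ι R).updateRow i 1

variable [Fintype ι]

variable (R) in
/-- The product of the Arnoux–Rauzy generators along a word; for three letters it is `Aw w`. -/
def arnouxRauzyProd (w : List ι) : Matrix ι ι R :=
  (w.map (arnouxRauzyMatrix R)).prod

variable (ι R) in
/-- The cone of the vectors of side lengths of (possibly degenerate) closed polygons: no coordinate
exceeds the sum of the others. Each inequality is stated with `u j` added to both sides, which
avoids sums over complements. For three letters it is the closed cone over the projective triangle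
with vertices `(0,1,1)`, `(1,0,1)`, `(1,1,0)`. -/
def polygonCone [PartialOrder R] : Set (ι → R) :=
  {u | 0 ≤ u ∧ ∀ j, 2 * u j ≤ ∑ k, u k}

theorem arnouxRauzyMatrix_mulVec (i : ι) (v : ι → R) :
    arnouxRauzyMatrix R i *ᵥ v = Function.update v i (∑ k, v k) := by
  rw [arnouxRauzyMatrix, updateRow_mulVec, one_mulVec, one_dotProduct]

theorem arnouxRauzyProd_cons (i : ι) (w : List ι) :
    arnouxRauzyProd R (i :: w) = arnouxRauzyMatrix R i * arnouxRauzyProd R w := by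
  simp only [arnouxRauzyProd, List.map_cons, List.prod_cons]

variable [PartialOrder R] [IsOrderedRing R]

theorem arnouxRauzyMatrix_mulVec_nonneg (i : ι) {v : ι → R} (hv : 0 ≤ v) :
    0 ≤ arnouxRauzyMatrix R i *ᵥ v := by
  rw [arnouxRauzyMatrix_mulVec, le_update_iff]
  exact ⟨Fintype.sum_nonneg hv, fun j _ ↦ hv j⟩

theorem arnouxRauzyProd_mulVec_nonneg (w : List ι) {v : ι → R} (hv : 0 ≤ v) :
    0 ≤ arnouxRauzyProd R w *ᵥ v := by
  induction w with
  | nil => simpa only [arnouxRauzyProd, List.map_nil, List.prod_nil, one_mulVec] using hv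
  | cons i w ih =>
    rw [arnouxRauzyProd_cons, ← mulVec_mulVec]
    exact arnouxRauzyMatrix_mulVec_nonneg i ih

theorem two_mul_arnouxRauzyMatrix_mulVec_le_sum {i j : ι} (hj : j ≠ i) {v : ι → R} (hv : 0 ≤ v) :
    2 * (arnouxRauzyMatrix R i *ᵥ v) j ≤ ∑ k, (arnouxRauzyMatrix R i *ᵥ v) k := by
  have hx : 0 ≤ arnouxRauzyMatrix R i *ᵥ v := arnouxRauzyMatrix_mulVec_nonneg i hv
  have hji : (arnouxRauzyMatrix R i *ᵥ v) j ≤ (arnouxRauzyMatrix R i *ᵥ v) i := by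
    rw [arnouxRauzyMatrix_mulVec, Function.update_of_ne hj, Function.update_self]
    exact Finset.single_le_sum (fun k _ ↦ hv k) (Finset.mem_univ j)
  calc 2 * (arnouxRauzyMatrix R i *ᵥ v) j
      ≤ (arnouxRauzyMatrix R i *ᵥ v) j + (arnouxRauzyMatrix R i *ᵥ v) i := by
        rw [two_mul]
        gcongr
    _ ≤ ∑ k, (arnouxRauzyMatrix R i *ᵥ v) k :=
      Finset.add_le_sum (fun k _ ↦ hx k) (Finset.mem_univ j) (Finset.mem_univ i) hj

end Semiring

section CommRing

variable {ι R : Type*} [DecidableEq ι] [CommRing R]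

theorem arnouxRauzyMatrix_eq_one_add_vecMulVec (i : ι) :
    arnouxRauzyMatrix R i = 1 + vecMulVec (Pi.single i 1) (1 - Pi.single i 1) := by
  ext j k
  obtain rfl | hj := eq_or_ne j i
  · simp [arnouxRauzyMatrix, vecMulVec_apply, one_apply, Pi.single_apply, eq_comm]
  · simp [arnouxRauzyMatrix, vecMulVec_apply, hj]

variable [Fintype ι]

theorem arnouxRauzyMatrix_transpose_mulVec (i : ι) (u : ι → R) :
    (arnouxRauzyMatrix R i)ᵀ *ᵥ u = u + u i • (1 - Pi.single i 1) := by
  rw [arnouxRauzyMatrix_eq_one_add_vecMulVec, transpose_add, transpose_one, transpose_vecMulVec,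
    add_mulVec, one_mulVec, vecMulVec_mulVec, single_one_dotProduct, op_smul_eq_smul]

theorem sum_arnouxRauzyMatrix_transpose_mulVec (i : ι) (u : ι → R) :
    ∑ k, ((arnouxRauzyMatrix R i)ᵀ *ᵥ u) k = ∑ k, u k + (Fintype.card ι - 1) * u i := by
  simp only [arnouxRauzyMatrix_transpose_mulVec, Pi.add_apply, Pi.smul_apply, Pi.sub_apply,
    Pi.one_apply, smul_eq_mul, Finset.sum_add_distrib, ← Finset.mul_sum, Finset.sum_sub_distrib,
    Finset.sum_const, Finset.card_univ, nsmul_eq_mul, mul_one, Finset.sum_pi_single',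
    Finset.mem_univ, ↓reduceIte]
  ring

variable [LinearOrder R] [IsStrictOrderedRing R]

theorem arnouxRauzyMatrix_transpose_mulVec_mem_polygonCone (hι : 3 ≤ Fintype.card ι) (i : ι)
    {u : ι → R} (hu : 0 ≤ u) (hui : ∀ j ≠ i, 2 * u j ≤ ∑ k, u k) :
    (arnouxRauzyMatrix R i)ᵀ *ᵥ u ∈ polygonCone ι R := by
  have hi : 0 ≤ u i := hu i
  have hsum : 2 * u i + ∑ k, u k ≤ ∑ k, ((arnouxRauzyMatrix R i)ᵀ *ᵥ u) k := by
    have hcard : (3 : R) ≤ Fintype.card ι := by exact_mod_cast hι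
    rw [sum_arnouxRauzyMatrix_transpose_mulVec, add_comm]
    gcongr
    linarith
  have apply_self : ((arnouxRauzyMatrix R i)ᵀ *ᵥ u) i = u i := by
    simp [arnouxRauzyMatrix_transpose_mulVec]
  have apply_ne {j : ι} (hj : j ≠ i) : ((arnouxRauzyMatrix R i)ᵀ *ᵥ u) j = u j + u i := by
    simp [arnouxRauzyMatrix_transpose_mulVec, hj]
  refine ⟨fun j ↦ ?_, fun j ↦ ?_⟩ <;> obtain rfl | hj := eq_or_ne j i
  · rwa [apply_self]
  · rw [apply_ne hj]
    exact add_nonneg (hu j) hi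
  · rw [apply_self]
    linarith [Fintype.sum_nonneg hu]
  · rw [apply_ne hj]
    linarith [hui j hj]

theorem arnouxRauzyMatrix_transpose_mulVec_mulVec_mem_polygonCone (hι : 3 ≤ Fintype.card ι) (i : ι)
    {v : ι → R} (hv : 0 ≤ v) :
    (arnouxRauzyMatrix R i)ᵀ *ᵥ (arnouxRauzyMatrix R i *ᵥ v) ∈ polygonCone ι R :=
  arnouxRauzyMatrix_transpose_mulVec_mem_polygonCone hι i (arnouxRauzyMatrix_mulVec_nonneg i hv)
    fun _ hj ↦ two_mul_arnouxRauzyMatrix_mulVec_le_sum hj hv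

theorem arnouxRauzyProd_transpose_mulVec_mem_polygonCone (hι : 3 ≤ Fintype.card ι) (w : List ι)
    {u : ι → R} (hu : u ∈ polygonCone ι R) :
    (arnouxRauzyProd R w)ᵀ *ᵥ u ∈ polygonCone ι R := by
  induction w generalizing u with
  | nil =>
    simpa only [arnouxRauzyProd, List.map_nil, List.prod_nil, transpose_one, one_mulVec] using hu
  | cons i w ih =>
    rw [arnouxRauzyProd_cons, transpose_mul, ← mulVec_mulVec]
    exact ih <| arnouxRauzyMatrix_transpose_mulVec_mem_polygonCone hι i hu.1 fun j _ ↦ hu.2 j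

theorem transpose_product_image_in_closed_triangle_general (hι : 3 ≤ Fintype.card ι) {w : List ι}
    (hw : w ≠ []) {v : ι → R} (hv : 0 ≤ v) :
    ((arnouxRauzyProd R w)ᵀ * arnouxRauzyProd R w) *ᵥ v ∈ polygonCone ι R := by
  obtain ⟨i, s, rfl⟩ := List.exists_cons_of_ne_nil hw
  rw [← mulVec_mulVec, arnouxRauzyProd_cons, transpose_mul, ← mulVec_mulVec, ← mulVec_mulVec]
  exact arnouxRauzyProd_transpose_mulVec_mem_polygonCone hι s <|
    arnouxRauzyMatrix_transpose_mulVec_mulVec_mem_polygonCone hι i <|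
      arnouxRauzyProd_mulVec_nonneg s hv

end CommRing

theorem mem_polygonCone_fin_three {R : Type*} [CommRing R] [LinearOrder R] [IsStrictOrderedRing R]
    {u : Fin 3 → R} :
    u ∈ polygonCone (Fin 3) R ↔
      (∀ j, 0 ≤ u j) ∧ u 0 ≤ u 1 + u 2 ∧ u 1 ≤ u 0 + u 2 ∧ u 2 ≤ u 0 + u 1 := by
  simp only [polygonCone, Set.mem_ofPred_eq, Pi.le_def, Pi.zero_apply, Fin.forall_fin_succ,
    Fin.sum_univ_three]
  grind

theorem A_eq_arnouxRauzyMatrix : A = arnouxRauzyMatrix ℝ := by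
  ext i j k
  fin_cases i <;> fin_cases j <;> fin_cases k <;> simp [A, arnouxRauzyMatrix]

theorem Aw_eq_arnouxRauzyProd (w : List (Fin 3)) : Aw w = arnouxRauzyProd ℝ w := by
  rw [Aw, A_eq_arnouxRauzyMatrix, arnouxRauzyProd]

theorem LastNotAllSame.ne_nil {w : List (Fin 3)} {k : ℕ} (hw : LastNotAllSame w k) : w ≠ [] := by
  rintro rfl
  exact hw.2 ⟨0, by simp⟩

/-- If the last `n ≥ 2` letters of `w` are not all the same, then for every vector `v`
with nonnegative coordinates, `(A_w)ᵗ A_w v` has nonnegative coordinates, each at most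
the sum of the other two. -/
theorem transpose_product_image_in_closed_triangle (n : ℕ) (hn : 2 ≤ n)
    (w : List (Fin 3)) (hw : LastNotAllSame w n)
    (v : Fin 3 → ℝ) (hv : ∀ i, 0 ≤ v i) :
    (∀ j, 0 ≤ (((Aw w)ᵀ * Aw w) *ᵥ v) j) ∧
    (((Aw w)ᵀ * Aw w) *ᵥ v) 0 ≤ (((Aw w)ᵀ * Aw w) *ᵥ v) 1 + (((Aw w)ᵀ * Aw w) *ᵥ v) 2 ∧
    (((Aw w)ᵀ * Aw w) *ᵥ v) 1 ≤ (((Aw w)ᵀ * Aw w) *ᵥ v) 0 + (((Aw w)ᵀ * Aw w) *ᵥ v) 2 ∧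
    (((Aw w)ᵀ * Aw w) *ᵥ v) 2 ≤ (((Aw w)ᵀ * Aw w) *ᵥ v) 0 + (((Aw w)ᵀ * Aw w) *ᵥ v) 1 := by
  rw [← mem_polygonCone_fin_three, Aw_eq_arnouxRauzyProd]
  exact transpose_product_image_in_closed_triangle_general (by simp) hw.ne_nil hv
end

section
/- There exists C > 0 such that for every word w with letters in {1,2,3} whose last two letters are different, and for all i ≠ j in {1,2,3}: ‖(A_w e_i) × (A_w e_j)‖ ≤ C · (σ2(A_w)/σ1(A_w)) · ‖A_w e_i‖ · ‖A_w e_j‖, where × is the cross product in ℝ³; equivalently, the projective distance d(A_w E_i, A_w E_j) = ‖A_w e_i × A_w e_j‖/(‖A_w e_i‖·‖A_w e_j‖) is at most C·σ2(A_w)/σ1(A_w), so the projective diameter of the image triangle is O(σ2/σ1). -/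
/-!
The cross product of two columns of `g` is, up to sign, a row of `adj g = det g • g⁻¹`, so its norm
is at most `|det g| ‖g⁻¹‖ = σ₁(g) σ₂(g)`. It therefore suffices that every column of `g = A_w` has
norm comparable to `σ₁(g)`. Since the entries of `g` are nonnegative, this holds as soon as the
column sums of `g` are comparable to each other.

The vector of column sums of `A_w` is obtained from `(1, 1, 1)` by applying the generators on the
right, and each generator preserves the triangle inequalities between the three entries. If `w` ends
in `ab` with `a ≠ b`, the column sums of `A_w` at `b`, `a`, `c` are `X + Y`, `2X + Y`, `2X + Y + Z`
in terms of the column sums `X`, `Y`, `Z` at `a`, `b`, `c` of the preceding prefix, and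
`Z ≤ X + Y` makes these agree up to a factor `3`.
-/

open Matrix MeasureTheory

section OperatorNorm

open WithLp
open scoped Matrix.Norms.L2Operator

variable {m n 𝕜 : Type*} [Fintype m] [Fintype n] [DecidableEq n] [RCLike 𝕜]

lemma norm_toLp_col_le_l2_opNorm (M : Matrix m n 𝕜) (j : n) : ‖toLp 2 (M.col j)‖ ≤ ‖M‖ := by
  simpa using M.l2_opNorm_mulVec (EuclideanSpace.single j 1)

lemma norm_toLp_row_le_l2_opNorm (M : Matrix m n 𝕜) (i : m) : ‖toLp 2 (M.row i)‖ ≤ ‖M‖ := by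
  classical
  have h := norm_toLp_col_le_l2_opNorm Mᴴ i
  rw [l2_opNorm_conjTranspose] at h
  simpa [EuclideanSpace.norm_eq] using h

lemma l2_opNorm_single [DecidableEq m] (i : m) (j : n) (a : 𝕜) : ‖Matrix.single i j a‖ = ‖a‖ := by
  have h := l2_opNorm_conjTranspose_mul_self (Matrix.single i j a)
  rw [conjTranspose_single, single_mul_single_same, ← diagonal_single, l2_opNorm_diagonal,
    Pi.norm_single, norm_mul, norm_star] at h
  exact (mul_self_inj (norm_nonneg _) (norm_nonneg _)).1 h.symm

lemma l2_opNorm_le_sum_norm (M : Matrix m n 𝕜) : ‖M‖ ≤ ∑ i, ∑ j, ‖M i j‖ := by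
  classical
  conv_lhs => rw [matrix_eq_sum_single M]
  exact norm_sum_le_of_le _ fun i _ ↦ norm_sum_le_of_le _ fun j _ ↦ (l2_opNorm_single i j _).le

lemma l2_opNorm_le_of_one_vecMul_le {M : Matrix m n ℝ} (hM : ∀ i j, 0 ≤ M i j) {K : ℝ} {j : n}
    (hK : ∀ k, (1 ᵥ* M) k ≤ K * (1 ᵥ* M) j) (hK₀ : 0 ≤ K) :
    ‖M‖ ≤ Fintype.card n * (K * (Fintype.card m * ‖toLp 2 (M.col j)‖)) := by
  have hcol : (1 ᵥ* M) j ≤ Fintype.card m * ‖toLp 2 (M.col j)‖ := by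
    simpa [vecMul, dotProduct] using Finset.sum_le_card_nsmul Finset.univ (fun i ↦ M i j) _
      fun i _ ↦ (le_abs_self _).trans (PiLp.norm_apply_le (toLp 2 (M.col j)) i)
  calc ‖M‖ ≤ ∑ i, ∑ k, ‖M i k‖ := l2_opNorm_le_sum_norm M
    _ = ∑ k, (1 ᵥ* M) k := by
      rw [Finset.sum_comm]
      simp [vecMul, dotProduct, abs_of_nonneg, hM]
    _ ≤ Fintype.card n * (K * (1 ᵥ* M) j) := by
      simpa using Finset.sum_le_card_nsmul Finset.univ _ _ fun k _ ↦ hK k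
    _ ≤ Fintype.card n * (K * (Fintype.card m * ‖toLp 2 (M.col j)‖)) := by gcongr

end OperatorNorm

section SingularValues

open WithLp
open scoped Matrix.Norms.L2Operator

lemma adjugate_row_eq_cross {R : Type*} [CommRing R] (M : Matrix (Fin 3) (Fin 3) R) (i : Fin 3) :
    M.adjugate.row i = crossProduct (M.col (i + 1)) (M.col (i + 2)) := by
  rw [adjugate_fin_three, cross_apply]
  fin_cases i <;> ext k <;> fin_cases k <;> simp <;> ring

lemma exists_cross_col_eq_adjugate_row {R : Type*} [CommRing R] (M : Matrix (Fin 3) (Fin 3) R)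
    {i j : Fin 3} (hij : i ≠ j) :
    ∃ k, crossProduct (M.col i) (M.col j) = M.adjugate.row k ∨
      crossProduct (M.col i) (M.col j) = -M.adjugate.row k := by
  obtain ⟨k, ⟨rfl, rfl⟩ | ⟨rfl, rfl⟩⟩ :
      ∃ k, i = k + 1 ∧ j = k + 2 ∨ i = k + 2 ∧ j = k + 1 := by
    revert i j; decide
  · exact ⟨k, .inl (adjugate_row_eq_cross M k).symm⟩
  · exact ⟨k, .inr (by rw [adjugate_row_eq_cross, cross_anticomm])⟩

lemma norm_toLp_cross_col_le (M : Matrix (Fin 3) (Fin 3) ℝ) {i j : Fin 3} (hij : i ≠ j) :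
    ‖toLp 2 (crossProduct (M.col i) (M.col j))‖ ≤ ‖M.adjugate‖ := by
  obtain ⟨k, h | h⟩ := exists_cross_col_eq_adjugate_row M hij
  · simpa only [h] using norm_toLp_row_le_l2_opNorm M.adjugate k
  · simpa only [h, toLp_neg, norm_neg] using norm_toLp_row_le_l2_opNorm M.adjugate k

lemma sval1_eq_l2_opNorm (g : M3) : sval1 g = ‖g‖ := rfl

lemma sval1_nonneg (g : M3) : 0 ≤ sval1 g :=
  norm_nonneg _

lemma sval1_pos {g : M3} (hg : g ≠ 0) : 0 < sval1 g := by
  rw [sval1_eq_l2_opNorm]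
  exact norm_pos_iff.2 hg

lemma sval2_nonneg (g : M3) : 0 ≤ sval2 g :=
  div_nonneg (mul_nonneg (abs_nonneg _) (sval1_nonneg _)) (sval1_nonneg _)

lemma enorm3_eq_norm (v : Fin 3 → ℝ) : enorm3 v = ‖toLp 2 v‖ := by
  simp [enorm3, EuclideanSpace.norm_eq, Fin.sum_univ_three]

lemma mulVec_basis3 (g : M3) (i : Fin 3) : g *ᵥ basis3 i = g.col i :=
  mulVec_single_one g i

lemma l2_opNorm_adjugate {g : M3} (hg : g.det ≠ 0) : ‖g.adjugate‖ = sval2 g * sval1 g := by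
  have hpos : 0 < sval1 g := sval1_pos fun h ↦ hg (by simp [h])
  have hadj : g.adjugate = g.det • g⁻¹ := by
    rw [inv_def, Ring.inverse_eq_inv', smul_inv_smul₀ hg]
  rw [hadj, norm_smul, Real.norm_eq_abs, ← sval1_eq_l2_opNorm, sval2, div_mul_cancel₀ _ hpos.ne']

lemma enorm3_cross_le {g : M3} (hg : g.det ≠ 0) {K : ℝ}
    (hK : ∀ i, sval1 g ≤ K * enorm3 (g *ᵥ basis3 i)) {i j : Fin 3} (hij : i ≠ j) :
    enorm3 (crossProduct (g *ᵥ basis3 i) (g *ᵥ basis3 j)) ≤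
      K ^ 2 * (sval2 g / sval1 g) * enorm3 (g *ᵥ basis3 i) * enorm3 (g *ᵥ basis3 j) := by
  have hpos : 0 < sval1 g := sval1_pos fun h ↦ hg (by simp [h])
  calc enorm3 (crossProduct (g *ᵥ basis3 i) (g *ᵥ basis3 j))
      ≤ sval2 g * sval1 g := by
        rw [enorm3_eq_norm, mulVec_basis3, mulVec_basis3, ← l2_opNorm_adjugate hg]
        exact norm_toLp_cross_col_le g hij
    _ = sval2 g / sval1 g * (sval1 g * sval1 g) := by field_simp
    _ ≤ sval2 g / sval1 g *
          ((K * enorm3 (g *ᵥ basis3 i)) * (K * enorm3 (g *ᵥ basis3 j))) :=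
        mul_le_mul_of_nonneg_left (mul_le_mul (hK i) (hK j) hpos.le (hpos.le.trans (hK i)))
          (div_nonneg (sval2_nonneg g) hpos.le)
    _ = _ := by ring

end SingularValues

section TriangleInequalities

/-- The triangle inequalities between the entries of a vector, in the form that any entry is at most
the sum of any two entries at distinct positions. Since `i = j` is allowed, nonnegativity of the
entries is included. -/
def TriangleInequalities {ι : Type*} (v : ι → ℝ) : Prop :=
  ∀ i j k, j ≠ k → v i ≤ v j + v k

lemma TriangleInequalities.nonneg {ι : Type*} [Nontrivial ι] {v : ι → ℝ}
    (hv : TriangleInequalities v) (i : ι) : 0 ≤ v i := by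
  obtain ⟨j, hj⟩ := exists_ne i
  linarith [hv j j i hj]

lemma vecMul_A_apply (v : Fin 3 → ℝ) (a i : Fin 3) :
    (v ᵥ* A a) i = if i = a then v i else v i + v a := by
  fin_cases a <;> fin_cases i <;> simp [A, vecMul, dotProduct, Fin.sum_univ_three] <;>
    ring

lemma TriangleInequalities.vecMul_A {v : Fin 3 → ℝ} (hv : TriangleInequalities v) (a : Fin 3) :
    TriangleInequalities (v ᵥ* A a) := by
  intro i j k hjk
  have hle := hv i j k hjk
  have ha := hv.nonneg a
  -- Since `j ≠ k`, at least one of the entries at `j` and `k` gains the term `v a`.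
  grind [vecMul_A_apply]

lemma TriangleInequalities.vecMul_A_vecMul_A_le {v : Fin 3 → ℝ} (hv : TriangleInequalities v)
    {a b : Fin 3} (hab : a ≠ b) (i j : Fin 3) :
    (v ᵥ* A a ᵥ* A b) i ≤ 3 * (v ᵥ* A a ᵥ* A b) j := by
  set u := v ᵥ* A a with hu
  have hu_nonneg := (hv.vecMul_A a).nonneg
  have hub : u b = v b + v a := by rw [hu, vecMul_A_apply, if_neg hab.symm]
  have hlower : u b ≤ (u ᵥ* A b) j := by
    rw [vecMul_A_apply]
    split_ifs with h
    · rw [h]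
    · linarith [hu_nonneg j]
  have hentry : u i ≤ 2 * u b := by
    have hui : u i ≤ v i + v a := by
      rw [hu, vecMul_A_apply]
      split_ifs <;> linarith [hv.nonneg a]
    linarith [hv i a b hab, hv.nonneg b]
  have hupper : (u ᵥ* A b) i ≤ 3 * u b := by
    rw [vecMul_A_apply]
    split_ifs <;> linarith [hu_nonneg b]
  linarith

end TriangleInequalities

section Words

lemma Aw_cons (a : Fin 3) (w : List (Fin 3)) : Aw (a :: w) = A a * Aw w := by
  simp [Aw]

lemma det_A (a : Fin 3) : (A a).det = 1 := by
  fin_cases a <;> simp [A, det_fin_three]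

lemma det_Aw (w : List (Fin 3)) : (Aw w).det = 1 := by
  induction w with
  | nil => simp [Aw]
  | cons a w ih => rw [Aw_cons, det_mul, det_A, ih, one_mul]

lemma A_nonneg (a i j : Fin 3) : 0 ≤ A a i j := by
  fin_cases a <;> fin_cases i <;> fin_cases j <;> simp [A]

lemma Aw_nonneg (w : List (Fin 3)) (i j : Fin 3) : 0 ≤ Aw w i j := by
  induction w generalizing i with
  | nil =>
    simp only [Aw, List.map_nil, List.prod_nil, one_apply]
    split_ifs <;> norm_num
  | cons a w ih =>
    rw [Aw_cons, mul_apply]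
    exact Finset.sum_nonneg fun k _ ↦ mul_nonneg (A_nonneg a i k) (ih k)

lemma triangleInequalities_one_vecMul_Aw (w : List (Fin 3)) :
    TriangleInequalities (1 ᵥ* Aw w) := by
  induction w using List.reverseRecOn with
  | nil => simp [Aw, TriangleInequalities]
  | append_singleton w a ih =>
    simpa [Aw, vecMul_vecMul] using ih.vecMul_A a

lemma one_vecMul_Aw_le {w : List (Fin 3)} (hw : LastTwoDiff w) (i j : Fin 3) :
    (1 ᵥ* Aw w) i ≤ 3 * (1 ᵥ* Aw w) j := by
  obtain ⟨u, a, b, rfl, hab⟩ := hw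
  simpa [Aw, vecMul_vecMul, mul_assoc] using
    (triangleInequalities_one_vecMul_Aw u).vecMul_A_vecMul_A_le hab i j

lemma sval1_Aw_le {w : List (Fin 3)} (hw : LastTwoDiff w) (i : Fin 3) :
    sval1 (Aw w) ≤ 27 * enorm3 (Aw w *ᵥ basis3 i) := by
  have h := l2_opNorm_le_of_one_vecMul_le (Aw_nonneg w) (one_vecMul_Aw_le hw · i) zero_le_three
  rw [mulVec_basis3, enorm3_eq_norm, sval1_eq_l2_opNorm]
  simp only [Fintype.card_fin, Nat.cast_ofNat] at h
  linarith

end Words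

/-- Diameter bound on image triangles: the projective distance between `A_w E_i` and
`A_w E_j` is `O(σ₂(A_w)/σ₁(A_w))` for words whose last two letters differ. -/
theorem cross_product_diam_bound :
    ∃ C > (0:ℝ), ∀ w : List (Fin 3), LastTwoDiff w →
      ∀ i j : Fin 3, i ≠ j →
        enorm3 (crossProduct (Aw w *ᵥ basis3 i) (Aw w *ᵥ basis3 j)) ≤
          C * (sval2 (Aw w) / sval1 (Aw w)) *
            enorm3 (Aw w *ᵥ basis3 i) * enorm3 (Aw w *ᵥ basis3 j) := by
  refine ⟨27 ^ 2, by norm_num, fun w hw i j hij ↦ ?_⟩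
  have hdet : (Aw w).det ≠ 0 := by simp [det_Aw]
  exact enorm3_cross_le hdet (sval1_Aw_le hw) hij
end

section
/- There exists C > 0 such that for every β > 0, every positive integer n, and every x ∈ ℝ³ the following holds. Let 𝒥 be the set of nonempty words w with letters in {1,2,3} that end with the block (1,2,3) (i.e. the last three letters of w are 1,2,3 in this order) and satisfy ‖κ(A_w)/n − x‖ ≤ β. Then for every j ∈ 𝒥, the set of words w ∈ 𝒥 of the form w = j·j'' with j'' a nonempty word (i.e. j is a proper prefix of w) is finite and has at most exp(Cβn) elements. -/
/-!
The matrix `A_w` has natural entries and `w ↦ A_w` is injective, so polynomially many words satisfy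
`s(A_w) ≤ R`, where `s` is the sum of the entries. If `j` ends with a block `b` whose matrix is
positive, then the entries in each row of `A_j` are comparable, so the norm is almost multiplicative
at the cut: `s(A_k) ‖A_j‖ ≤ c √d ‖A_j A_k‖` with `c = s(A_b)`. Hence every extension `w = j k` with
`‖A_w‖ ≤ e^L ‖A_j‖` has `s(A_k) ≤ c √d e^L`, which leaves at most `(c √d e^L + 1) ^ (d²)` words `k`.

To absorb the constants into `e^(CL)` one needs `e^L` bounded away from `1` as soon as there is one
extension. As `b` does not overlap itself, `k` also ends with `b`, so all entries of `A_k` are at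
least `1`, whence `√d ‖A_j‖ ≤ ‖A_j A_k‖ ≤ e^L ‖A_j‖`.
-/

open Matrix MeasureTheory

/-! ### Entry sums and row sums -/

section Matrix

open scoped Matrix.Norms.L2Operator

variable {l m n : Type*} [Fintype m] [Fintype n]

/-- The sum of the entries of a matrix; for nonnegative matrices, a substitute for the norm. -/
def entrySum {R : Type*} [AddCommMonoid R] (M : Matrix m n R) : R := ∑ i, ∑ k, M i k

section CanonicallyOrdered

variable {R : Type*} [AddCommMonoid R] [PartialOrder R] [CanonicallyOrderedAdd R]

lemma rowSum_le_entrySum (M : Matrix m n R) (i : m) : ∑ k, M i k ≤ entrySum M :=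
  Finset.single_le_sum_of_canonicallyOrdered (f := fun i => ∑ k, M i k) (Finset.mem_univ i)

lemma apply_le_entrySum (M : Matrix m n R) (i : m) (k : n) : M i k ≤ entrySum M :=
  (Finset.single_le_sum_of_canonicallyOrdered (Finset.mem_univ k)).trans (rowSum_le_entrySum M i)

end CanonicallyOrdered

lemma sum_mul_apply {R : Type*} [NonUnitalSemiring R] (M : Matrix l m R) (N : Matrix m n R)
    (i : l) : ∑ k, (M * N) i k = ∑ p, M i p * ∑ k, N p k := by
  simp only [Matrix.mul_apply, Finset.mul_sum]
  exact Finset.sum_comm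

lemma finite_and_ncard_le_of_entrySum_le {α : Type*} {f : α → Matrix m n ℕ}
    (hf : Function.Injective f) {S : Set α} {R : ℕ} (hS : ∀ a ∈ S, entrySum (f a) ≤ R) :
    S.Finite ∧ S.ncard ≤ (R + 1) ^ (Fintype.card m * Fintype.card n) := by
  classical
  let box : Finset (m → n → ℕ) := Finset.Iic fun _ _ => R
  have maps_box : ∀ a ∈ S, f a ∈ (box : Set (m → n → ℕ)) := fun a ha =>
    Finset.mem_coe.2 <| (Finset.mem_Iic (α := m → n → ℕ)).2 fun i k =>
      (apply_le_entrySum (f a) i k).trans (hS a ha)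
  refine ⟨Set.Finite.of_injOn maps_box hf.injOn box.finite_toSet, ?_⟩
  calc S.ncard ≤ (box : Set (m → n → ℕ)).ncard :=
        Set.ncard_le_ncard_of_injOn f maps_box hf.injOn box.finite_toSet
    _ = (R + 1) ^ (Fintype.card m * Fintype.card n) := by
        rw [Set.ncard_coe_finset]
        simp [box, Pi.card_Iic, ← pow_mul, mul_comm]

lemma norm_toLp_le_of_abs_le {v w : n → ℝ} (h : ∀ i, |v i| ≤ w i) :
    ‖WithLp.toLp 2 v‖ ≤ ‖WithLp.toLp 2 w‖ := by
  rw [EuclideanSpace.norm_eq, EuclideanSpace.norm_eq]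
  gcongr with i
  exact (h i).trans (le_abs_self _)

variable [Fintype l] [DecidableEq l] [DecidableEq n]

/-- The comparison vector is `‖v‖ • 1`: it dominates `v` entrywise, and a matrix sends `1` to its
vector of row sums. -/
lemma l2_opNorm_le_of_rowSum_le {M : Matrix m n ℝ} {N : Matrix m l ℝ} (hM : ∀ i k, 0 ≤ M i k)
    (h : ∀ i, ∑ k, M i k ≤ ∑ k, N i k) : ‖M‖ ≤ √(Fintype.card l) * ‖N‖ := by
  rw [Matrix.l2_opNorm_def]
  refine ContinuousLinearMap.opNorm_le_bound _ (by positivity) fun v => ?_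
  have dominated (i : m) : |(M *ᵥ v) i| ≤ (N *ᵥ (‖v‖ • 1)) i := by
    calc |(M *ᵥ v) i| ≤ ∑ k, |M i k * v k| := Finset.abs_sum_le_sum_abs _ _
      _ ≤ ∑ k, M i k * ‖v‖ := by
        gcongr with k
        rw [abs_mul, abs_of_nonneg (hM i k)]
        exact mul_le_mul_of_nonneg_left (PiLp.norm_apply_le v k) (hM i k)
      _ ≤ (∑ k, N i k) * ‖v‖ := by
        rw [← Finset.sum_mul]
        gcongr
        exact h i
      _ = (N *ᵥ (‖v‖ • 1)) i := by
        simp [Matrix.mulVec, dotProduct, Finset.sum_mul]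
  calc ‖WithLp.toLp 2 (M *ᵥ v)‖
      ≤ ‖WithLp.toLp 2 (N *ᵥ (‖v‖ • 1))‖ := norm_toLp_le_of_abs_le dominated
    _ ≤ ‖N‖ * ‖WithLp.toLp 2 (‖v‖ • (1 : l → ℝ))‖ := Matrix.l2_opNorm_mulVec N _
    _ = √(Fintype.card l) * ‖N‖ * ‖v‖ := by
      rw [WithLp.toLp_smul, norm_smul, norm_norm, PiLp.norm_toLp_one (by simp)]
      simp [Real.sqrt_eq_rpow]
      ring

lemma mul_l2_opNorm_natCast_le_of_rowSum_le {M : Matrix m n ℕ} {N : Matrix m l ℕ} {s t : ℕ}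
    (h : ∀ i, s * ∑ k, M i k ≤ t * ∑ k, N i k) :
    s * ‖M.map ((↑) : ℕ → ℝ)‖ ≤ t * (√(Fintype.card l) * ‖N.map ((↑) : ℕ → ℝ)‖) := by
  have key := l2_opNorm_le_of_rowSum_le (M := (s : ℝ) • M.map ((↑) : ℕ → ℝ))
    (N := (t : ℝ) • N.map ((↑) : ℕ → ℝ))
    (fun i k => mul_nonneg s.cast_nonneg (Nat.cast_nonneg (M i k))) fun i => by
      simpa [Finset.mul_sum] using (Nat.cast_le (α := ℝ)).2 (h i)
  simpa [norm_smul, mul_left_comm] using key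

end Matrix

/-! ### Rauzy matrices and freeness of the semigroup -/

section RauzyWord

variable {ι : Type*} [Fintype ι] [DecidableEq ι]

/-- The Rauzy generators on an arbitrary alphabet, with natural entries: the identity matrix with
row `a` replaced by ones. -/
def rauzyGen (a : ι) : Matrix ι ι ℕ := Matrix.updateRow 1 a 1

/-- Product of the Rauzy generators along a word. -/
def rauzyWord (w : List ι) : Matrix ι ι ℕ := (w.map rauzyGen).prod

@[simp]
lemma rauzyWord_nil : rauzyWord ([] : List ι) = 1 := by simp [rauzyWord]

lemma rauzyWord_cons (a : ι) (w : List ι) : rauzyWord (a :: w) = rauzyGen a * rauzyWord w := by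
  simp [rauzyWord]

lemma rauzyWord_append (u v : List ι) : rauzyWord (u ++ v) = rauzyWord u * rauzyWord v := by
  simp [rauzyWord]

lemma rauzyGen_mul_apply_self (a : ι) (M : Matrix ι ι ℕ) (k : ι) :
    (rauzyGen a * M) a k = ∑ i, M i k := by
  simp [rauzyGen, Matrix.mul_apply]

lemma rauzyGen_mul_apply_of_ne {a i : ι} (h : i ≠ a) (M : Matrix ι ι ℕ) (k : ι) :
    (rauzyGen a * M) i k = M i k := by
  simp [rauzyGen, Matrix.updateRow_mul, h]

lemma le_rauzyGen_mul_apply (a : ι) (M : Matrix ι ι ℕ) (i k : ι) :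
    M i k ≤ (rauzyGen a * M) i k := by
  obtain rfl | h := eq_or_ne i a
  · rw [rauzyGen_mul_apply_self]
    exact Finset.single_le_sum_of_canonicallyOrdered (f := fun i => M i k) (Finset.mem_univ i)
  · rw [rauzyGen_mul_apply_of_ne h]

lemma rauzyWord_apply_le_append (u v : List ι) (i k : ι) :
    rauzyWord v i k ≤ rauzyWord (u ++ v) i k := by
  induction u with
  | nil => rfl
  | cons a u ih =>
    rw [List.cons_append, rauzyWord_cons]
    exact ih.trans (le_rauzyGen_mul_apply a _ i k)

lemma rauzyWord_apply_self_pos (w : List ι) (i : ι) : 0 < rauzyWord w i i := by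
  simpa [Nat.one_le_iff_ne_zero, Nat.pos_iff_ne_zero] using rauzyWord_apply_le_append w [] i i

lemma rauzyWord_cons_apply_le (a : ι) (w : List ι) (i k : ι) :
    rauzyWord (a :: w) i k ≤ rauzyWord (a :: w) a k := by
  obtain rfl | h := eq_or_ne i a
  · rfl
  · rw [rauzyWord_cons, rauzyGen_mul_apply_self, rauzyGen_mul_apply_of_ne h]
    exact Finset.single_le_sum_of_canonicallyOrdered (f := fun i => rauzyWord w i k)
      (Finset.mem_univ i)

lemma rauzyWord_cons_apply_lt {a i : ι} (h : i ≠ a) (w : List ι) :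
    rauzyWord (a :: w) i a < rauzyWord (a :: w) a a := by
  rw [rauzyWord_cons, rauzyGen_mul_apply_self, rauzyGen_mul_apply_of_ne h]
  exact Finset.single_lt_sum (f := fun p => rauzyWord w p a) h.symm (Finset.mem_univ i)
    (Finset.mem_univ a) (rauzyWord_apply_self_pos w a) fun _ _ _ => Nat.zero_le _

lemma rauzyWord_cons_ne_one [Nontrivial ι] (a : ι) (w : List ι) : rauzyWord (a :: w) ≠ 1 := by
  intro h
  obtain ⟨k, hk⟩ := exists_ne a
  simpa [h, Matrix.one_apply_ne hk.symm] using rauzyWord_cons_apply_le a w k k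

lemma rauzyGen_mul_injective (a : ι) : Function.Injective (rauzyGen a * ·) := by
  intro M N h
  have entry (i k : ι) : (rauzyGen a * M) i k = (rauzyGen a * N) i k := by
    rw [show rauzyGen a * M = rauzyGen a * N from h]
  have off_row {i : ι} (hi : i ≠ a) (k : ι) : M i k = N i k := by
    simpa only [rauzyGen_mul_apply_of_ne hi] using entry i k
  ext i k
  obtain rfl | hi := eq_or_ne i a
  · have total := entry i k
    simp only [rauzyGen_mul_apply_self, Fintype.sum_eq_add_sum_compl i] at total
    have rest : ∑ p ∈ {i}ᶜ, M p k = ∑ p ∈ {i}ᶜ, N p k :=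
      Finset.sum_congr rfl fun p hp => off_row (by simpa using hp) k
    omega
  · exact off_row hi k

/-- The first letter of `w` is recovered as the index of the dominating row of the matrix. -/
lemma rauzyWord_injective [Nontrivial ι] : Function.Injective (rauzyWord (ι := ι)) := by
  intro v
  induction v with
  | nil =>
    rintro (_ | ⟨b, w⟩) h
    · rfl
    · exact absurd h.symm (rauzyWord_cons_ne_one b w)
  | cons a v ih =>
    rintro (_ | ⟨b, w⟩) h
    · exact absurd h (rauzyWord_cons_ne_one a v)
    · obtain rfl : b = a := by
        by_contra hba
        have lt := rauzyWord_cons_apply_lt hba v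
        rw [h] at lt
        exact lt.not_ge (rauzyWord_cons_apply_le b w a a)
      rw [rauzyWord_cons, rauzyWord_cons] at h
      rw [ih (rauzyGen_mul_injective b h)]

/-! ### Almost-multiplicativity of the norm -/

lemma rowSum_rauzyWord_le {b j : List ι} (hb : ∀ i k, 0 < rauzyWord b i k) (hj : b <:+ j)
    (i k : ι) : ∑ p, rauzyWord j i p ≤ entrySum (rauzyWord b) * rauzyWord j i k := by
  obtain ⟨u, rfl⟩ := hj
  have block (p : ι) : ∑ q, rauzyWord b p q ≤ entrySum (rauzyWord b) * rauzyWord b p k :=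
    (rowSum_le_entrySum (rauzyWord b) p).trans (Nat.le_mul_of_pos_right _ (hb p k))
  rw [rauzyWord_append, sum_mul_apply, Matrix.mul_apply, Finset.mul_sum]
  refine Finset.sum_le_sum fun p _ => ?_
  rw [mul_left_comm]
  exact Nat.mul_le_mul_left _ (block p)

open scoped Matrix.Norms.L2Operator in
/-- The largest singular value of the matrix of a word, as the `ℓ²` operator norm over `ℝ`. -/
noncomputable def wordNorm (w : List ι) : ℝ := ‖(rauzyWord w).map ((↑) : ℕ → ℝ)‖

open scoped Matrix.Norms.L2Operator in
lemma wordNorm_pos [Nonempty ι] (w : List ι) : 0 < wordNorm w := by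
  refine norm_pos_iff.2 fun h => ?_
  obtain ⟨i⟩ := ‹Nonempty ι›
  have : (rauzyWord w i i : ℝ) = 0 := congrFun (congrFun h i) i
  exact (rauzyWord_apply_self_pos w i).ne' (by exact_mod_cast this)

lemma entrySum_mul_wordNorm_le {b j : List ι} (hb : ∀ i k, 0 < rauzyWord b i k) (hj : b <:+ j)
    (k : List ι) : entrySum (rauzyWord k) * wordNorm j ≤
      entrySum (rauzyWord b) * (√(Fintype.card ι) * wordNorm (j ++ k)) := by
  refine mul_l2_opNorm_natCast_le_of_rowSum_le fun i => ?_
  rw [rauzyWord_append, sum_mul_apply, entrySum, Finset.sum_mul, Finset.mul_sum]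
  refine Finset.sum_le_sum fun p _ => ?_
  rw [mul_comm, ← mul_assoc]
  exact Nat.mul_le_mul_right _ (rowSum_rauzyWord_le hb hj i p)

lemma sqrt_card_mul_wordNorm_le [Nonempty ι] (j : List ι) {k : List ι}
    (hk : ∀ i p, 0 < rauzyWord k i p) :
    √(Fintype.card ι) * wordNorm j ≤ wordNorm (j ++ k) := by
  have card_mul : Fintype.card ι * wordNorm j ≤
      (1 : ℕ) * (√(Fintype.card ι) * wordNorm (j ++ k)) := by
    refine mul_l2_opNorm_natCast_le_of_rowSum_le fun i => ?_
    rw [one_mul, rauzyWord_append, sum_mul_apply, Finset.mul_sum]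
    refine Finset.sum_le_sum fun p _ => ?_
    rw [mul_comm]
    gcongr
    simpa using Finset.card_nsmul_le_sum Finset.univ (rauzyWord k p) 1 fun q _ => hk p q
  have sqrt_pos : 0 < √(Fintype.card ι : ℝ) := by simp [Fintype.card_pos]
  refine le_of_mul_le_mul_left ?_ sqrt_pos
  rwa [← mul_assoc, Real.mul_self_sqrt (Nat.cast_nonneg _), ← one_mul (√_ * wordNorm (j ++ k)),
    ← Nat.cast_one]

end RauzyWord

/-! ### Unbordered blocks and the multiplicity bound -/

/-- A word is unbordered if no proper nonempty prefix of it is also a suffix, so that two of its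
occurrences never overlap. -/
def IsUnbordered {α : Type*} (b : List α) : Prop := ∀ c, c <+: b → c <:+ b → c = [] ∨ c = b

lemma IsUnbordered.suffix_of_suffix_append {α : Type*} {b j k : List α} (hb : IsUnbordered b)
    (hj : b <:+ j) (hjk : b <:+ j ++ k) (hk : k ≠ []) : b <:+ k := by
  obtain h | ⟨c, rfl⟩ := List.suffix_or_suffix_of_suffix hjk (List.suffix_append j k)
  · exact h
  have hcj : c <:+ j := List.suffix_append_self_iff.1 hjk
  have hc : c <:+ c ++ k := by
    refine (List.suffix_or_suffix_of_suffix hcj hj).resolve_right fun h => hk ?_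
    simpa using h.length_le
  obtain rfl | h := hb c (List.prefix_append c k) hc
  · simp
  · exact absurd (List.self_eq_append_right.1 h) hk

lemma exists_mul_add_one_le_pow (a : ℝ) {r : ℝ} (hr : 1 < r) :
    ∃ p : ℕ, 0 < p ∧ ∀ x, r ≤ x → a * x + 1 ≤ x ^ p := by
  obtain ⟨p, hp⟩ := pow_unbounded_of_one_lt (a + 1) hr
  refine ⟨p + 1, p.succ_pos, fun x hx => ?_⟩
  have one_le : 1 ≤ x := hr.le.trans hx
  calc a * x + 1 ≤ (a + 1) * x := by linarith
    _ ≤ r ^ p * x := by gcongr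
    _ ≤ x ^ p * x := by gcongr
    _ = x ^ (p + 1) := (pow_succ x p).symm

section Multiplicity

variable {ι : Type*} [Fintype ι] [DecidableEq ι]

lemma sqrt_card_le_and_entrySum_le_of_wordNorm_le [Nonempty ι] {b j k : List ι} {E : ℝ}
    (hb : IsUnbordered b) (hpos : ∀ i i', 0 < rauzyWord b i i') (hj : b <:+ j)
    (hjk : b <:+ j ++ k) (hk : k ≠ []) (hE : wordNorm (j ++ k) ≤ E * wordNorm j) :
    √(Fintype.card ι) ≤ E ∧
      entrySum (rauzyWord k) ≤ entrySum (rauzyWord b) * √(Fintype.card ι) * E := by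
  have hkpos (i i' : ι) : 0 < rauzyWord k i i' := by
    obtain ⟨c, rfl⟩ := hb.suffix_of_suffix_append hj hjk hk
    exact (hpos i i').trans_le (rauzyWord_apply_le_append c b i i')
  constructor <;> refine le_of_mul_le_mul_right ?_ (wordNorm_pos j)
  · exact (sqrt_card_mul_wordNorm_le j hkpos).trans hE
  · calc entrySum (rauzyWord k) * wordNorm j
        ≤ entrySum (rauzyWord b) * (√(Fintype.card ι) * wordNorm (j ++ k)) :=
          entrySum_mul_wordNorm_le hpos hj k
      _ ≤ entrySum (rauzyWord b) * (√(Fintype.card ι) * (E * wordNorm j)) := by gcongr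
      _ = entrySum (rauzyWord b) * √(Fintype.card ι) * E * wordNorm j := by ring

theorem prefix_multiplicity_bound_general [Nontrivial ι] {b : List ι} (hb : IsUnbordered b)
    (hpos : ∀ i i', 0 < rauzyWord b i i') :
    ∃ C > (0 : ℝ), ∀ (L : ℝ) (j : List ι), b <:+ j → ∀ S : Set (List ι),
      (∀ w ∈ S, b <:+ w ∧ (∃ k, k ≠ [] ∧ w = j ++ k) ∧
        wordNorm w ≤ Real.exp L * wordNorm j) →
      S.Finite ∧ (S.ncard : ℝ) ≤ Real.exp (C * L) := by
  set d := Fintype.card ι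
  set a := entrySum (rauzyWord b) * √(d : ℝ)
  have one_lt_sqrt : 1 < √(d : ℝ) :=
    Real.lt_sqrt_of_sq_lt (by simpa using Fintype.one_lt_card)
  obtain ⟨p, p_pos, hp⟩ := exists_mul_add_one_le_pow a one_lt_sqrt
  refine ⟨p * (d * d), by positivity, fun L j hj S hS => ?_⟩
  set T := (j ++ ·) ⁻¹' S
  have hST : S ⊆ (j ++ ·) '' T := by
    intro w hw
    obtain ⟨-, ⟨k, -, rfl⟩, -⟩ := hS w hw
    exact ⟨k, hw, rfl⟩
  have growth {k : List ι} (hk : k ∈ T) :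
      √(d : ℝ) ≤ Real.exp L ∧ entrySum (rauzyWord k) ≤ a * Real.exp L := by
    obtain ⟨hjk, ⟨k', hk', heq⟩, hnorm⟩ := hS (j ++ k) hk
    obtain rfl := List.append_cancel_left heq
    exact sqrt_card_le_and_entrySum_le_of_wordNorm_le hb hpos hj hjk hk' hnorm
  obtain ⟨T_finite, T_card⟩ := finite_and_ncard_le_of_entrySum_le rauzyWord_injective
    fun k (hk : k ∈ T) => Nat.le_floor (growth hk).2
  refine ⟨(T_finite.image _).subset hST, ?_⟩
  obtain rfl | ⟨w, hw⟩ := S.eq_empty_or_nonempty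
  · simpa using (Real.exp_pos _).le
  obtain ⟨k, hk, -⟩ := hST hw
  calc (S.ncard : ℝ) ≤ ((⌊a * Real.exp L⌋₊ + 1 : ℕ) : ℝ) ^ (d * d) := by
        exact_mod_cast ((Set.ncard_le_ncard hST (T_finite.image _)).trans
          (Set.ncard_image_le T_finite)).trans T_card
    _ ≤ (a * Real.exp L + 1) ^ (d * d) := by
        push_cast
        gcongr
        exact Nat.floor_le (by positivity)
    _ ≤ (Real.exp L ^ p) ^ (d * d) := by
        gcongr
        exact hp _ (growth hk).1
    _ = Real.exp (p * (d * d) * L) := by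
        rw [← pow_mul, ← Real.exp_nat_mul]
        push_cast
        rfl

end Multiplicity

/-! ### The three-letter alphabet -/

lemma A_eq_map_rauzyGen (a : Fin 3) : A a = (rauzyGen a).map ((↑) : ℕ → ℝ) := by
  ext i k
  fin_cases a <;> fin_cases i <;> fin_cases k <;> simp [A, rauzyGen]

lemma Aw_eq_map_rauzyWord (w : List (Fin 3)) : Aw w = (rauzyWord w).map ((↑) : ℕ → ℝ) := by
  have gens : A = (Nat.castRingHom ℝ).mapMatrix ∘ rauzyGen := funext A_eq_map_rauzyGen
  rw [Aw, gens, ← List.map_map, ← map_list_prod]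
  rfl

lemma sval1_Aw (w : List (Fin 3)) : sval1 (Aw w) = wordNorm w := by
  rw [Aw_eq_map_rauzyWord]
  rfl

lemma isUnbordered_zero_one_two : IsUnbordered ([0, 1, 2] : List (Fin 3)) := by
  intro c hc
  rw [← List.mem_inits] at hc
  revert c
  decide

lemma rauzyWord_zero_one_two_pos (i k : Fin 3) : 0 < rauzyWord [0, 1, 2] i k := by
  fin_cases i <;> fin_cases k <;> decide

lemma abs_apply_le_enorm3 (v : Fin 3 → ℝ) (i : Fin 3) : |v i| ≤ enorm3 v := by
  refine Real.abs_le_sqrt ?_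
  rw [← Fin.sum_univ_three fun i => v i ^ 2]
  exact Finset.single_le_sum (f := fun i => v i ^ 2) (fun i _ => sq_nonneg (v i))
    (Finset.mem_univ i)

lemma kappa_sub_le {β : ℝ} {n : ℕ} (hn : 0 < n) {x : Fin 3 → ℝ} {g h : M3}
    (hg : enorm3 (fun i => kappa g i / n - x i) ≤ β)
    (hh : enorm3 (fun i => kappa h i / n - x i) ≤ β) (i : Fin 3) :
    kappa h i - kappa g i ≤ 2 * β * n := by
  have near_g := abs_le.1 ((abs_apply_le_enorm3 _ i).trans hg)
  have near_h := abs_le.1 ((abs_apply_le_enorm3 _ i).trans hh)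
  rw [← div_le_iff₀ (Nat.cast_pos.2 hn), sub_div]
  linarith

lemma wordNorm_le_of_kappa_close {β : ℝ} {n : ℕ} (hn : 0 < n) {x : Fin 3 → ℝ}
    {j w : List (Fin 3)} (hj : enorm3 (fun i => kappa (Aw j) i / n - x i) ≤ β)
    (hw : enorm3 (fun i => kappa (Aw w) i / n - x i) ≤ β) :
    wordNorm w ≤ Real.exp (2 * β * n) * wordNorm j := by
  have log_sub : Real.log (wordNorm w) - Real.log (wordNorm j) ≤ 2 * β * n := by
    simpa [kappa, sval1_Aw] using kappa_sub_le hn hj hw 0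
  rwa [← Real.log_div (wordNorm_pos w).ne' (wordNorm_pos j).ne',
    Real.log_le_iff_le_exp (div_pos (wordNorm_pos w) (wordNorm_pos j)),
    div_le_iff₀ (wordNorm_pos j)] at log_sub

/-- Prefix-multiplicity bound: in the set of words ending with the block `(1,2,3)` and
with Cartan projection `βn`-close to `nx`, each word has at most `exp(Cβn)` proper
extensions inside the set. -/
theorem prefix_multiplicity_bound :
    ∃ C > (0:ℝ), ∀ β : ℝ, 0 < β → ∀ n : ℕ, 0 < n → ∀ x : Fin 3 → ℝ,
      ∀ j ∈ {w : List (Fin 3) | (∃ u, w = u ++ [0, 1, 2]) ∧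
          enorm3 (fun i => kappa (Aw w) i / n - x i) ≤ β},
        ({w : List (Fin 3) | ((∃ u, w = u ++ [0, 1, 2]) ∧
            enorm3 (fun i => kappa (Aw w) i / n - x i) ≤ β) ∧
          ∃ j'' : List (Fin 3), j'' ≠ [] ∧ w = j ++ j''}).Finite ∧
        (({w : List (Fin 3) | ((∃ u, w = u ++ [0, 1, 2]) ∧
            enorm3 (fun i => kappa (Aw w) i / n - x i) ≤ β) ∧
          ∃ j'' : List (Fin 3), j'' ≠ [] ∧ w = j ++ j''}).ncard : ℝ) ≤
          Real.exp (C * β * n) := by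
  obtain ⟨C, hC, bound⟩ :=
    prefix_multiplicity_bound_general isUnbordered_zero_one_two rauzyWord_zero_one_two_pos
  refine ⟨C * 2, by positivity, fun β _ n hn x j hj => ?_⟩
  rw [show C * 2 * β * n = C * (2 * β * n) by ring]
  exact bound _ j (hj.1.imp fun _ => Eq.symm) _ fun w hw =>
    ⟨hw.1.1.imp fun _ => Eq.symm, hw.2, wordNorm_le_of_kappa_close hn hj.2 hw.1.2⟩
end

section
/- The Rauzy gasket X contains the boundary of the simplex Δ̃, i.e. every point x ∈ Δ̃ with at least one coordinate equal to 0 belongs to X; consequently dimH X ≥ 1. -/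
/-!
Applying `A i` replaces the `i`-th coordinate of a vector by `ω`, the sum of all coordinates, so
`A i` is inverted by subtracting from the `i`-th coordinate all the others. The result stays
nonnegative as soon as the `i`-th coordinate is at least half of `ω`, and a vector with a vanishing
coordinate `k` always has such an `i ≠ k`: the larger of the two remaining coordinates. The `k`-th
coordinate is untouched, so this subtractive Euclidean algorithm never stops, and it writes every
nonnegative vector with a zero coordinate as `Aw w *ᵥ u` with `u ≥ 0` and `w` of any prescribed
length. Projecting `u` to the simplex shows that its sides lie in the gasket, and a side is a
segment, of Hausdorff dimension `1`.
-/

open Matrix MeasureTheory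

lemma exists_list_prod_mulVec_eq {ι n R : Type*} [Fintype n] [DecidableEq n] [Semiring R]
    {M : ι → Matrix n n R} {C : Set (n → R)} (hC : ∀ v ∈ C, ∃ i, ∃ u ∈ C, M i *ᵥ u = v)
    (m : ℕ) {v : n → R} (hv : v ∈ C) :
    ∃ w : List ι, w.length = m ∧ ∃ u ∈ C, (w.map M).prod *ᵥ u = v := by
  induction m generalizing v with
  | zero => exact ⟨[], rfl, v, hv, by simp⟩
  | succ m ih =>
    obtain ⟨i, v', hv', rfl⟩ := hC v hv
    obtain ⟨w, hw, u, hu, rfl⟩ := ih hv'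
    exact ⟨i :: w, by simp [hw], u, hu, by simp [mulVec_mulVec]⟩

lemma omega3_eq_sum (v : Fin 3 → ℝ) : omega3 v = ∑ i, v i :=
  (Fin.sum_univ_three v).symm

lemma omega3_smul (c : ℝ) (v : Fin 3 → ℝ) : omega3 (c • v) = c * omega3 v := by
  simp only [omega3_eq_sum, Pi.smul_apply, smul_eq_mul, Finset.mul_sum]

lemma omega3_add (u v : Fin 3 → ℝ) : omega3 (u + v) = omega3 u + omega3 v := by
  simp only [omega3_eq_sum, Pi.add_apply, Finset.sum_add_distrib]

lemma omega3_basis3 (i : Fin 3) : omega3 (basis3 i) = 1 := by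
  simp only [omega3_eq_sum, basis3, Finset.sum_pi_single', Finset.mem_univ, if_true]

lemma omega3_update (v : Fin 3 → ℝ) (i : Fin 3) (c : ℝ) :
    omega3 (Function.update v i c) = omega3 v - v i + c := by
  rw [omega3_eq_sum, omega3_eq_sum, Finset.sum_update_of_mem (Finset.mem_univ i),
    ← Finset.sum_sdiff (Finset.subset_univ {i}), Finset.sum_singleton]
  ring

lemma omega3_nonneg {v : Fin 3 → ℝ} (hv : 0 ≤ v) : 0 ≤ omega3 v :=
  omega3_eq_sum v ▸ Fintype.sum_nonneg hv

lemma omega3_eq_zero_iff {v : Fin 3 → ℝ} (hv : 0 ≤ v) : omega3 v = 0 ↔ v = 0 := by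
  rw [omega3_eq_sum, Fintype.sum_eq_zero_iff_of_nonneg hv]

lemma A_mulVec (i : Fin 3) (v : Fin 3 → ℝ) : A i *ᵥ v = Function.update v i (omega3 v) := by
  ext j
  fin_cases i <;> fin_cases j <;> simp [A, omega3, mulVec, dotProduct, Fin.sum_univ_three]

lemma A_mulVec_update (i : Fin 3) (v : Fin 3 → ℝ) :
    A i *ᵥ Function.update v i (2 * v i - omega3 v) = v := by
  have hω : omega3 (Function.update v i (2 * v i - omega3 v)) = v i := by
    rw [omega3_update]
    ring
  rw [A_mulVec, hω, Function.update_idem, Function.update_eq_self]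

lemma exists_ne_omega3_le_two_mul {v : Fin 3 → ℝ} {k : Fin 3} (hk : v k = 0) :
    ∃ i ≠ k, omega3 v ≤ 2 * v i := by
  by_contra! h
  have h₁ := h (k + 1) (by simp)
  have h₂ := h (k + 2) (by simp)
  have hω : omega3 v = v k + v (k + 1) + v (k + 2) := by
    fin_cases k <;> simp [omega3] <;> ring
  linarith

/-- The topological boundary of the cone of nonnegative vectors, on which the subtractive Euclidean
algorithm can be iterated forever. -/
def coneBoundary : Set (Fin 3 → ℝ) := {v | 0 ≤ v ∧ ∃ k, v k = 0}

lemma exists_A_mulVec_eq_of_mem_coneBoundary {v : Fin 3 → ℝ} (hv : v ∈ coneBoundary) :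
    ∃ i, ∃ u ∈ coneBoundary, A i *ᵥ u = v := by
  obtain ⟨hv, k, hk⟩ := hv
  obtain ⟨i, hik, hi⟩ := exists_ne_omega3_le_two_mul hk
  refine ⟨i, Function.update v i (2 * v i - omega3 v), ⟨?_, k, ?_⟩, A_mulVec_update i v⟩
  · exact le_update_iff.2 ⟨sub_nonneg.2 hi, fun j _ => hv j⟩
  · rw [Function.update_of_ne hik.symm, hk]

lemma exists_Aw_mulVec_eq_of_mem_coneBoundary (n : ℕ) {v : Fin 3 → ℝ} (hv : v ∈ coneBoundary) :
    ∃ w : List (Fin 3), w.length = n ∧ ∃ u ∈ coneBoundary, Aw w *ᵥ u = v :=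
  exists_list_prod_mulVec_eq (fun _ => exists_A_mulVec_eq_of_mem_coneBoundary) n hv

/-- The central projection of nonzero nonnegative vectors to the simplex, which turns the linear
action of `Aw w` into `fmap w`. It has the junk value `0` where `omega3` vanishes. -/
noncomputable def simplexProj (v : Fin 3 → ℝ) : E3 := toE ((omega3 v)⁻¹ • v)

lemma simplexProj_smul {c : ℝ} (hc : c ≠ 0) (v : Fin 3 → ℝ) :
    simplexProj (c • v) = simplexProj v := by
  rw [simplexProj, simplexProj, omega3_smul, smul_smul, _root_.mul_inv_rev,
    inv_mul_cancel_right₀ hc]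

lemma simplexProj_mem_simplex {v : Fin 3 → ℝ} (hv : 0 ≤ v) (hω : omega3 v ≠ 0) :
    simplexProj v ∈ simplex := by
  refine ⟨smul_nonneg (inv_nonneg.2 (omega3_nonneg hv)) hv, ?_⟩
  change omega3 ((omega3 v)⁻¹ • v) = 1
  rw [omega3_smul, inv_mul_cancel₀ hω]

lemma simplexProj_ofE {x : E3} (hx : omega3 (ofE x) = 1) : simplexProj (ofE x) = x := by
  rw [simplexProj, hx, inv_one, one_smul]
  rfl

lemma fmap_simplexProj (w : List (Fin 3)) {v : Fin 3 → ℝ} (hω : omega3 v ≠ 0) :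
    fmap w (simplexProj v) = simplexProj (Aw w *ᵥ v) := by
  change simplexProj (Aw w *ᵥ ((omega3 v)⁻¹ • v)) = simplexProj (Aw w *ᵥ v)
  rw [mulVec_smul, simplexProj_smul (inv_ne_zero hω)]

lemma mem_fmap_image_simplex {w : List (Fin 3)} {x : E3} {u : Fin 3 → ℝ}
    (hx : omega3 (ofE x) = 1) (hu : 0 ≤ u) (hw : Aw w *ᵥ u = ofE x) : x ∈ fmap w '' simplex := by
  have hω : omega3 u ≠ 0 := fun h => by
    simp [← hw, (omega3_eq_zero_iff hu).1 h, omega3] at hx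
  exact ⟨simplexProj u, simplexProj_mem_simplex hu hω, by
    rw [fmap_simplexProj w hω, hw, simplexProj_ofE hx]⟩

/-- The side of the simplex opposite to the vertex `toE (basis3 k)`; the three sides make up its
boundary. -/
def simplexSide (k : Fin 3) : Set E3 := {x ∈ simplex | ofE x k = 0}

lemma simplexSide_subset_gasket (k : Fin 3) : simplexSide k ⊆ gasket := by
  rintro x ⟨⟨hx, hω⟩, hk⟩
  refine Set.mem_iInter.2 fun n => ?_
  obtain ⟨w, hw, u, hu, hwu⟩ := exists_Aw_mulVec_eq_of_mem_coneBoundary (n + 1) ⟨hx, k, hk⟩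
  exact Set.mem_biUnion hw (mem_fmap_image_simplex hω hu.1 hwu)

lemma convex_simplex : Convex ℝ simplex := by
  rintro x ⟨hx, hωx⟩ y ⟨hy, hωy⟩ a b ha hb hab
  refine ⟨fun i => add_nonneg (mul_nonneg ha (hx i)) (mul_nonneg hb (hy i)), ?_⟩
  change omega3 (a • ofE x + b • ofE y) = 1
  rw [omega3_add, omega3_smul, omega3_smul, hωx, hωy, mul_one, mul_one, hab]

lemma convex_simplexSide (k : Fin 3) : Convex ℝ (simplexSide k) := by
  refine convex_simplex.inter fun x hx y hy a b _ _ _ => ?_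
  change a * ofE x k + b * ofE y k = 0
  rw [hx, hy, mul_zero, mul_zero, add_zero]

lemma toE_basis3_mem_simplexSide {i k : Fin 3} (h : i ≠ k) : toE (basis3 i) ∈ simplexSide k :=
  ⟨⟨(Pi.single_nonneg.2 zero_le_one : 0 ≤ basis3 i), omega3_basis3 i⟩, Pi.single_eq_of_ne h.symm 1⟩

lemma toE_basis3_injective : Function.Injective fun i => toE (basis3 i) := by
  intro i j h
  have hi : basis3 i i = basis3 j i := congrFun (congrArg ofE h) i
  by_contra hij
  simp [basis3, hij] at hi

lemma one_le_dimH_simplexSide (k : Fin 3) : 1 ≤ dimH (simplexSide k) := by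
  have hne : toE (basis3 (k + 1)) ≠ toE (basis3 (k + 2)) := toE_basis3_injective.ne (by simp)
  have hsub : segment ℝ (toE (basis3 (k + 1))) (toE (basis3 (k + 2))) ⊆ simplexSide k :=
    (convex_simplexSide k).segment_subset (toE_basis3_mem_simplexSide (by simp))
      (toE_basis3_mem_simplexSide (by simp))
  exact (Real.dimH_segment hne).ge.trans (dimH_mono hsub)

/-- The Rauzy gasket contains the boundary of the simplex; consequently `dimH X ≥ 1`. -/
theorem gasket_contains_boundary_and_dimH_ge_one :
    (∀ x ∈ simplex, (ofE x 0 = 0 ∨ ofE x 1 = 0 ∨ ofE x 2 = 0) → x ∈ gasket) ∧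
    1 ≤ dimH gasket := by
  refine ⟨fun x hx h => ?_,
    (one_le_dimH_simplexSide 0).trans (dimH_mono (simplexSide_subset_gasket 0))⟩
  rcases h with h | h | h <;> exact simplexSide_subset_gasket _ ⟨hx, h⟩
end
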